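/- For every complex number q with 0 < |q| < 1, one has ∑_{i,j,k,l ≥ 0} q^{i²+j²+k²+l²−il−jl−kl−i+j+k} / ((q²;q²)_i (q²;q²)_j (q²;q²)_k (q²;q²)_l) = 2 J_4⁹ / (J_2⁷ J_8²) + J_2⁷ J_8² / (J_1⁴ J_4⁵). -/

import Mathlib

open scoped BigOperators

/-- The infinite q-Pochhammer symbol `(a; q)_∞ = ∏_{k=0}^∞ (1 - a q^k)`. -/
noncomputable def qPochInf (a q : ℂ) : ℂ := ∏' n : ℕ, (1 - a * q ^ n)

/-- The finite q-Pochhammer symbol `(a; q)_n = ∏_{k=0}^{n-1} (1 - a q^k)`. -/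
noncomputable def qPoch (a q : ℂ) (n : ℕ) : ℂ :=
  Finset.prod (Finset.range n) (fun k => 1 - a * q ^ k)

/-- `J_m = (q^m; q^m)_∞`. -/
noncomputable def J (q : ℂ) (m : ℕ) : ℂ := qPochInf (q ^ m) (q ^ m)

/-- `J_{a,m} = (q^a; q^m)_∞ (q^{m-a}; q^m)_∞ (q^m; q^m)_∞`. -/
noncomputable def Jam (q : ℂ) (a m : ℕ) : ℂ :=
  qPochInf (q ^ a) (q ^ m) * qPochInf (q ^ (m - a)) (q ^ m) * qPochInf (q ^ m) (q ^ m)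


open Filter Topology

theorem mulp (a Q : ℂ) (hQ : ‖Q‖ < 1) : Summable (fun n : ℕ => ‖-(a * Q ^ n)‖) := by
  simp only [norm_neg, norm_mul, norm_pow]
  exact (summable_geometric_of_lt_one (norm_nonneg _) hQ).mul_left _

theorem mulp2 (a Q : ℂ) (hQ : ‖Q‖ < 1) : Multipliable (fun n : ℕ => 1 - a * Q ^ n) := by
  simpa [sub_eq_add_neg] using multipliable_one_add_of_summable (mulp a Q hQ)

theorem inf_tendsto (a Q : ℂ) (hQ : ‖Q‖ < 1) :
    Tendsto (fun n => qPoch a Q n) atTop (𝓝 (qPochInf a Q)) :=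
  (mulp2 a Q hQ).tendsto_prod_tprod_nat

theorem inf_ne (a Q : ℂ) (hQ : ‖Q‖ < 1) (h : ∀ n : ℕ, 1 - a * Q ^ n ≠ 0) : qPochInf a Q ≠ 0 := by
  have := tprod_one_add_ne_zero_of_summable (f := fun n : ℕ => -(a * Q ^ n))
    (by intro i; simpa [sub_eq_add_neg] using h i) (mulp a Q hQ)
  simpa [qPochInf, sub_eq_add_neg] using this

theorem one_sub_ne (x : ℂ) (h : ‖x‖ < 1) : 1 - x ≠ 0 := by
  intro h'
  rw [sub_eq_zero] at h'
  rw [← h'] at h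
  simp at h

theorem inf_ne' (a Q : ℂ) (hQ : ‖Q‖ < 1) (h : ‖a‖ < 1) : qPochInf a Q ≠ 0 := by
  apply inf_ne a Q hQ
  intro n
  apply one_sub_ne
  rw [norm_mul, norm_pow]
  exact lt_of_le_of_lt (mul_le_of_le_one_right (norm_nonneg _) (pow_le_one₀ (norm_nonneg _) hQ.le)) h

theorem qPoch_zero (a Q : ℂ) : qPoch a Q 0 = 1 := by simp [qPoch]

theorem qPoch_succ (a Q : ℂ) (n : ℕ) : qPoch a Q (n + 1) = qPoch a Q n * (1 - a * Q ^ n) := by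
  simp [qPoch, Finset.prod_range_succ]

theorem qPoch_succ' (a Q : ℂ) (n : ℕ) : qPoch a Q (n + 1) = (1 - a) * qPoch (a * Q) Q n := by
  simp only [qPoch, Finset.prod_range_succ']
  rw [mul_comm]
  simp [pow_succ, mul_assoc, mul_comm]

theorem qPoch_shift (a Q : ℂ) (n : ℕ) :
    (1 - a) * qPoch (a * Q) Q n = qPoch a Q n * (1 - a * Q ^ n) := by
  rw [← qPoch_succ', qPoch_succ]

theorem inf_succ (a Q : ℂ) (hQ : ‖Q‖ < 1) : qPochInf a Q = (1 - a) * qPochInf (a * Q) Q := by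
  have h1 := (inf_tendsto a Q hQ).comp (tendsto_add_atTop_nat 1)
  have h2 := (inf_tendsto (a * Q) Q hQ).const_mul (1 - a)
  refine tendsto_nhds_unique h1 (h2.congr ?_)
  intro n
  simp [qPoch_succ']

theorem qPoch_neg (a Q : ℂ) (n : ℕ) :
    qPoch a Q n * qPoch (-a) Q n = qPoch (a ^ 2) (Q ^ 2) n := by
  simp only [qPoch, ← Finset.prod_mul_distrib]
  refine Finset.prod_congr rfl fun k _ => ?_
  ring

theorem qPoch_split (a Q : ℂ) (n : ℕ) :
    qPoch a (Q ^ 2) n * qPoch (a * Q) (Q ^ 2) n = qPoch a Q (2 * n) := by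
  induction n with
  | zero => simp [qPoch_zero]
  | succ n ih =>
    rw [show 2 * (n + 1) = 2 * n + 1 + 1 by ring]
    simp only [qPoch_succ]
    rw [← ih]
    ring

theorem sq_norm (Q : ℂ) (hQ : ‖Q‖ < 1) : ‖Q ^ 2‖ < 1 := by
  rw [norm_pow]; exact pow_lt_one₀ (norm_nonneg _) hQ (by norm_num)

theorem inf_neg (a Q : ℂ) (hQ : ‖Q‖ < 1) :
    qPochInf a Q * qPochInf (-a) Q = qPochInf (a ^ 2) (Q ^ 2) := by
  refine tendsto_nhds_unique ((inf_tendsto a Q hQ).mul (inf_tendsto (-a) Q hQ))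
    ((inf_tendsto (a ^ 2) (Q ^ 2) (sq_norm Q hQ)).congr ?_)
  intro n
  rw [qPoch_neg]

theorem tendsto_two : Tendsto (fun n : ℕ => 2 * n) atTop atTop :=
  tendsto_id.const_mul_atTop' (by norm_num)

theorem inf_split (a Q : ℂ) (hQ : ‖Q‖ < 1) :
    qPochInf a (Q ^ 2) * qPochInf (a * Q) (Q ^ 2) = qPochInf a Q := by
  refine tendsto_nhds_unique ((inf_tendsto a (Q ^ 2) (sq_norm Q hQ)).mul
    (inf_tendsto (a * Q) (Q ^ 2) (sq_norm Q hQ)))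
    (((inf_tendsto a Q hQ).comp tendsto_two).congr ?_)
  intro n
  simp [qPoch_split]

theorem qPoch_norm_le (a Q : ℂ) (hQ : ‖Q‖ < 1) (ha : ‖a‖ ≤ 1) (n : ℕ) : ‖qPoch a Q n‖ ≤ 2 ^ n := by
  induction n with
  | zero => simp [qPoch_zero]
  | succ n ih =>
    rw [qPoch_succ, norm_mul, pow_succ]
    gcongr
    have : ‖a * Q ^ n‖ ≤ 1 := by
      rw [norm_mul, norm_pow]
      exact mul_le_one₀ ha (by positivity) (pow_le_one₀ (norm_nonneg _) hQ.le)
    calc ‖1 - a * Q ^ n‖ ≤ ‖(1 : ℂ)‖ + ‖a * Q ^ n‖ := norm_sub_le _ _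
      _ ≤ 2 := by rw [norm_one]; linarith

theorem qPoch_ge (a Q : ℂ) (r : ℝ) (hQ : ‖Q‖ < 1) (hr : r < 1) (ha : ‖a‖ ≤ r) (n : ℕ) :
    (1 - r) ^ n ≤ ‖qPoch a Q n‖ := by
  induction n with
  | zero => simp [qPoch_zero]
  | succ n ih =>
    rw [qPoch_succ, norm_mul, pow_succ]
    have h1 : 0 ≤ 1 - r := by linarith
    gcongr
    have : ‖a * Q ^ n‖ ≤ r := by
      rw [norm_mul, norm_pow]
      exact (mul_le_of_le_one_right (norm_nonneg _) (pow_le_one₀ (norm_nonneg _) hQ.le)).trans ha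
    have h2 := norm_sub_norm_le (1 : ℂ) (a * Q ^ n)
    rw [norm_one] at h2
    linarith

theorem qPoch_inv_le (a Q : ℂ) (r : ℝ) (hQ : ‖Q‖ < 1) (hr : r < 1) (ha : ‖a‖ ≤ r) (n : ℕ) :
    ‖qPoch a Q n‖⁻¹ ≤ ((1 - r)⁻¹) ^ n := by
  have h1 : 0 < 1 - r := by linarith
  rw [inv_pow]
  exact inv_anti₀ (by positivity) (qPoch_ge a Q r hQ hr ha n)

theorem qPoch_ne (a Q : ℂ) (hQ : ‖Q‖ < 1) (ha : ‖a‖ < 1) (n : ℕ) : qPoch a Q n ≠ 0 := by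
  have h1 : 0 < 1 - ‖a‖ := by linarith
  have := qPoch_ge a Q ‖a‖ hQ ha le_rfl n
  have h2 : 0 < (1 - ‖a‖) ^ n := by positivity
  exact norm_pos_iff.mp (h2.trans_le this)

theorem summ_aux (C s : ℝ) (hC : 0 ≤ C) (hs : 0 ≤ s) (hs1 : s < 1) :
    Summable (fun n : ℕ => s ^ (n * n) * C ^ n) := by
  have ht : Tendsto (fun n : ℕ => s ^ n * C) atTop (𝓝 0) := by
    simpa using (tendsto_pow_atTop_nhds_zero_of_lt_one hs hs1).mul_const C
  have hev : ∀ᶠ n : ℕ in atTop, s ^ n * C ≤ 1 / 2 := ht.eventually_le_const (by norm_num)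
  refine Summable.of_norm_bounded_eventually_nat (g := fun n : ℕ => (1 / 2 : ℝ) ^ n)
    (summable_geometric_of_lt_one (by norm_num) (by norm_num)) ?_
  filter_upwards [hev] with n hn
  rw [Real.norm_of_nonneg (by positivity), pow_mul, ← mul_pow]
  gcongr

theorem telesc (f G : ℕ → ℂ) (hf : Summable f) (h : ∀ n, f n = G (n + 1) - G n)
    (h0 : G 0 = 0) (hG : Tendsto G atTop (𝓝 0)) : ∑' n, f n = 0 := by
  have h1 := hf.hasSum.tendsto_sum_nat
  refine tendsto_nhds_unique h1 (hG.congr ?_)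
  intro n
  rw [Finset.sum_congr rfl (fun k _ => h k), Finset.sum_range_sub, h0, sub_zero]

noncomputable def eT (q w : ℂ) (i : ℕ) : ℂ := q ^ (i * i) * w ^ i / qPoch (q ^ 2) (q ^ 2) i

theorem nsq_le (q : ℂ) (h1 : ‖q‖ < 1) : ‖q ^ 2‖ ≤ ‖q‖ := by
  rw [norm_pow, pow_two]
  exact mul_le_of_le_one_right (norm_nonneg _) h1.le

theorem eT_bound (q w : ℂ) (h1 : ‖q‖ < 1) (i : ℕ) :
    ‖eT q w i‖ ≤ ‖q‖ ^ (i * i) * (‖w‖ * (1 - ‖q‖)⁻¹) ^ i := by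
  have := qPoch_inv_le (q ^ 2) (q ^ 2) ‖q‖ (sq_norm q h1) h1 (nsq_le q h1) i
  rw [eT, div_eq_mul_inv, norm_mul, norm_mul, norm_inv, norm_pow, norm_pow, mul_pow, mul_assoc]
  gcongr

theorem eT_summable_norm (q w : ℂ) (h1 : ‖q‖ < 1) : Summable (fun i => ‖eT q w i‖) := by
  have h2 : 0 < 1 - ‖q‖ := by linarith
  refine Summable.of_nonneg_of_le (fun _ => norm_nonneg _) (eT_bound q w h1)
    (summ_aux _ _ (by positivity) (norm_nonneg _) h1)

theorem eT_summable (q w : ℂ) (h1 : ‖q‖ < 1) : Summable (eT q w) :=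
  (eT_summable_norm q w h1).of_norm

theorem e_step (q w : ℂ) (h1 : ‖q‖ < 1) :
    ∑' i, eT q w i = (1 - (-(w * q))) * ∑' i, eT q (w * q ^ 2) i := by
  have s1 := eT_summable q w h1
  have s2 := eT_summable q (w * q ^ 2) h1
  rw [← sub_eq_zero, ← tsum_mul_left, ← s1.tsum_sub (s2.mul_left _)]
  refine telesc _ (fun n => -(1 - (q ^ 2) ^ n) * eT q w n) (s1.sub (s2.mul_left _)) ?_ (by simp) ?_
  · intro n
    have hn := qPoch_ne (q ^ 2) (q ^ 2) (sq_norm q h1) (sq_norm q h1) n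
    have hn1 := qPoch_ne (q ^ 2) (q ^ 2) (sq_norm q h1) (sq_norm q h1) (n + 1)
    simp only [eT]
    rw [qPoch_succ] at hn1 ⊢
    have hn2 := right_ne_zero_of_mul hn1
    field_simp
    ring
  · have t1 : Tendsto (fun n : ℕ => -(1 - (q ^ 2) ^ n)) atTop (𝓝 (-(1 - 0))) :=
      ((tendsto_pow_atTop_nhds_zero_of_norm_lt_one (sq_norm q h1)).const_sub 1).neg
    simpa using t1.mul s1.tendsto_atTop_zero

theorem pow_norm_le_one (q : ℂ) (h1 : ‖q‖ < 1) (n : ℕ) : ‖q ^ n‖ ≤ 1 := by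
  rw [norm_pow]; exact pow_le_one₀ (norm_nonneg _) h1.le

theorem pow_norm_lt_one (q : ℂ) (h1 : ‖q‖ < 1) (n : ℕ) (hn : n ≠ 0) : ‖q ^ n‖ < 1 := by
  rw [norm_pow]; exact pow_lt_one₀ (norm_nonneg _) h1 hn

theorem euler (q w : ℂ) (h1 : ‖q‖ < 1) :
    ∑' i, eT q w i = qPochInf (-(w * q)) (q ^ 2) := by
  have hit : ∀ N : ℕ, ∑' i, eT q w i =
      qPoch (-(w * q)) (q ^ 2) N * ∑' i, eT q (w * (q ^ 2) ^ N) i := by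
    intro N
    induction N with
    | zero => simp [qPoch_zero]
    | succ N ih =>
      rw [ih, e_step _ _ h1, qPoch_succ]
      rw [show w * (q ^ 2) ^ N * q ^ 2 = w * (q ^ 2) ^ (N + 1) by ring]
      ring
  have hq2 := tendsto_pow_atTop_nhds_zero_of_norm_lt_one (sq_norm q h1)
  have h2 : 0 < 1 - ‖q‖ := by linarith
  have hlim : Tendsto (fun N : ℕ => ∑' i, eT q (w * (q ^ 2) ^ N) i) atTop (𝓝 (∑' i, eT q 0 i)) := by
    refine tendsto_tsum_of_dominated_convergence
      (bound := fun i => ‖q‖ ^ (i * i) * (‖w‖ * (1 - ‖q‖)⁻¹) ^ i)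
      (summ_aux _ _ (by positivity) (norm_nonneg _) h1) ?_ ?_
    · intro k
      have : Tendsto (fun N : ℕ => w * (q ^ 2) ^ N) atTop (𝓝 0) := by simpa using hq2.const_mul w
      exact ((this.pow k).const_mul _).div_const _
    · refine Eventually.of_forall fun N k => (eT_bound _ _ h1 k).trans ?_
      have : ‖w * (q ^ 2) ^ N‖ ≤ ‖w‖ := by
        rw [norm_mul]
        exact mul_le_of_le_one_right (norm_nonneg _) (pow_norm_le_one _ (sq_norm q h1) N)
      gcongr
  have hz : ∑' i, eT q 0 i = 1 := by
    rw [tsum_eq_single 0]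
    · simp [eT, qPoch_zero]
    · intro i hi
      simp [eT, hi]
  rw [hz] at hlim
  have := (inf_tendsto (-(w * q)) (q ^ 2) (sq_norm q h1)).mul hlim
  rw [mul_one] at this
  exact tendsto_nhds_unique (tendsto_const_nhds.congr hit) this

/-! ### Second sum -/

noncomputable def aT (q a b : ℂ) (m : ℕ) : ℂ :=
  q ^ (m * m) * q ^ m * (qPoch a (q ^ 2) m * qPoch b (q ^ 2) m) /
    (qPoch (q ^ 2) (q ^ 2) m * qPoch (a * b * q ^ 2) ((q ^ 2) ^ 2) m)

theorem ab_le (q a b : ℂ) (h1 : ‖q‖ < 1) (ha : ‖a‖ ≤ 1) (hb : ‖b‖ ≤ 1) :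
    ‖a * b * q ^ 2‖ ≤ ‖q‖ := by
  rw [norm_mul, norm_mul]
  exact (mul_le_of_le_one_left (norm_nonneg _) (mul_le_one₀ ha (norm_nonneg _) hb)).trans (nsq_le q h1)

theorem aT_bound (q a b : ℂ) (h1 : ‖q‖ < 1) (ha : ‖a‖ ≤ 1) (hb : ‖b‖ ≤ 1) (i : ℕ) :
    ‖aT q a b i‖ ≤ ‖q‖ ^ (i * i) * (1 * (2 * 2) * ((1 - ‖q‖)⁻¹ * (1 - ‖q‖)⁻¹)) ^ i := by
  have e1 := qPoch_inv_le (q ^ 2) (q ^ 2) ‖q‖ (sq_norm q h1) h1 (nsq_le q h1) i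
  have e2 := qPoch_inv_le (a * b * q ^ 2) ((q ^ 2) ^ 2) ‖q‖ (sq_norm _ (sq_norm q h1)) h1
    (ab_le q a b h1 ha hb) i
  have e3 := qPoch_norm_le a (q ^ 2) (sq_norm q h1) ha i
  have e4 := qPoch_norm_le b (q ^ 2) (sq_norm q h1) hb i
  have e5 : ‖q ^ i‖ ≤ 1 ^ i := by rw [one_pow]; exact pow_norm_le_one q h1 i
  have h2 : 0 < 1 - ‖q‖ := by linarith
  have e6 : ‖aT q a b i‖ = ‖q‖ ^ (i * i) * (‖q ^ i‖ * (‖qPoch a (q ^ 2) i‖ * ‖qPoch b (q ^ 2) i‖) *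
      (‖qPoch (q ^ 2) (q ^ 2) i‖⁻¹ * ‖qPoch (a * b * q ^ 2) ((q ^ 2) ^ 2) i‖⁻¹)) := by
    simp only [aT, norm_inv, norm_mul, norm_pow, div_eq_mul_inv, mul_inv]
    ring
  rw [e6]
  simp only [mul_pow]
  gcongr

theorem aT_summable (q a b : ℂ) (h1 : ‖q‖ < 1) (ha : ‖a‖ ≤ 1) (hb : ‖b‖ ≤ 1) :
    Summable (aT q a b) := by
  have h2 : 0 < 1 - ‖q‖ := by linarith
  exact Summable.of_norm_bounded (summ_aux _ _ (by positivity) (norm_nonneg _) h1)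
    (aT_bound q a b h1 ha hb)

theorem alg1 (C A B Y X α β γ δ : ℂ) :
    C * (A * α / β * B) / (Y * (X * γ / δ)) = C * (A * B) / (Y * X) * (α * δ / (β * γ)) := by
  simp only [div_eq_mul_inv, mul_inv, inv_inv]
  ring

theorem aT_succ (q a b : ℂ) (m : ℕ) : aT q a b (m + 1) =
    aT q a b m * (q ^ 2 * (q ^ 2) ^ m * (1 - a * (q ^ 2) ^ m) * (1 - b * (q ^ 2) ^ m) /
      ((1 - q ^ 2 * (q ^ 2) ^ m) * (1 - a * b * q ^ 2 * ((q ^ 2) ^ m) ^ 2))) := by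
  simp only [aT, qPoch_succ]
  rw [div_mul_div_comm]
  congr 1
  · ring
  · ring

theorem aT_shift (q a b : ℂ) (h1 : ‖q‖ < 1) (ha : ‖a‖ ≤ 1) (hb : ‖b‖ ≤ 1) (ha1 : 1 - a ≠ 0)
    (m : ℕ) : aT q (a * (q ^ 2) ^ 2) b m =
    aT q a b m * ((1 - a * (q ^ 2) ^ m) * (1 - a * (q ^ 2) ^ m * q ^ 2) * (1 - a * b * q ^ 2) /
      ((1 - a) * (1 - a * q ^ 2) * (1 - a * b * q ^ 2 * ((q ^ 2) ^ m) ^ 2))) := by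
  have hQ := sq_norm q h1
  have hA : ‖a * b * q ^ 2‖ < 1 := (ab_le q a b h1 ha hb).trans_lt h1
  have hA' : ‖a * b * q ^ 2 * (q ^ 2) ^ 2‖ < 1 := by
    rw [norm_mul]
    exact (mul_le_of_le_one_right (norm_nonneg _) (pow_norm_le_one _ hQ 2)).trans_lt hA
  have n1 := qPoch_ne (q ^ 2) (q ^ 2) hQ hQ m
  have n2 := qPoch_ne _ ((q ^ 2) ^ 2) (sq_norm _ hQ) hA m
  have n3 := qPoch_ne _ ((q ^ 2) ^ 2) (sq_norm _ hQ) hA' m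
  have n4 := one_sub_ne _ hA
  have hh : ‖a * q ^ 2‖ < 1 := by
    rw [norm_mul]; exact (mul_le_of_le_one_left (norm_nonneg _) ha).trans_lt hQ
  have n5 := one_sub_ne _ hh
  have n6 : 1 - a * b * q ^ 2 * ((q ^ 2) ^ m) ^ 2 ≠ 0 := by
    apply one_sub_ne
    rw [norm_mul]
    refine (mul_le_of_le_one_right (norm_nonneg _) ?_).trans_lt hA
    rw [← pow_mul]
    exact pow_norm_le_one _ hQ _
  have s1 := qPoch_shift a (q ^ 2) m
  have s2 := qPoch_shift (a * q ^ 2) (q ^ 2) m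
  have s3 := qPoch_shift (a * b * q ^ 2) ((q ^ 2) ^ 2) m
  have r1 : qPoch (a * (q ^ 2) ^ 2) (q ^ 2) m = qPoch a (q ^ 2) m * ((1 - a * (q ^ 2) ^ m) *
      (1 - a * (q ^ 2) ^ m * q ^ 2)) / ((1 - a) * (1 - a * q ^ 2)) := by
    rw [eq_div_iff (mul_ne_zero ha1 n5)]
    rw [show a * (q ^ 2) ^ 2 = a * q ^ 2 * q ^ 2 by ring]
    linear_combination (1 - a) * s2 + (1 - a * (q ^ 2) ^ m * q ^ 2) * s1
  have r2 : qPoch (a * (q ^ 2) ^ 2 * b * q ^ 2) ((q ^ 2) ^ 2) m =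
      qPoch (a * b * q ^ 2) ((q ^ 2) ^ 2) m * (1 - a * b * q ^ 2 * ((q ^ 2) ^ m) ^ 2) /
        (1 - a * b * q ^ 2) := by
    rw [eq_div_iff n4]
    rw [show a * (q ^ 2) ^ 2 * b * q ^ 2 = a * b * q ^ 2 * (q ^ 2) ^ 2 by ring]
    linear_combination s3
  simp only [aT]
  rw [r1, r2]
  exact alg1 _ _ _ _ _ _ _ _ _

theorem a_step (q a b : ℂ) (h1 : ‖q‖ < 1) (ha : ‖a‖ ≤ 1) (hb : ‖b‖ ≤ 1) (ha1 : 1 - a ≠ 0) :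
    (1 - a * b * q ^ 2) * ∑' m, aT q a b m =
      (1 - a * q ^ 2) * ∑' m, aT q (a * (q ^ 2) ^ 2) b m := by
  have hQ := sq_norm q h1
  have hA : ‖a * b * q ^ 2‖ < 1 := (ab_le q a b h1 ha hb).trans_lt h1
  have n4 := one_sub_ne _ hA
  have hh : ‖a * q ^ 2‖ < 1 := by
    rw [norm_mul]; exact (mul_le_of_le_one_left (norm_nonneg _) ha).trans_lt hQ
  have n5 := one_sub_ne _ hh
  have ha' : ‖a * (q ^ 2) ^ 2‖ ≤ 1 := by
    rw [norm_mul]; exact (mul_le_of_le_one_right (norm_nonneg _) (pow_norm_le_one _ hQ 2)).trans ha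
  have s1 := aT_summable q a b h1 ha hb
  have s2 := aT_summable q _ b h1 ha' hb
  rw [← sub_eq_zero, ← tsum_mul_left, ← tsum_mul_left, ← (s1.mul_left _).tsum_sub (s2.mul_left _)]
  refine telesc _ (fun n => ((1 - a * b * q ^ 2) * (a / (1 - a)) * (1 - (q ^ 2) ^ n)) * aT q a b n)
    ((s1.mul_left _).sub (s2.mul_left _)) ?_ (by simp) ?_
  · intro m
    rw [aT_shift q a b h1 ha hb ha1, aT_succ]
    have n6 : 1 - a * b * q ^ 2 * ((q ^ 2) ^ m) ^ 2 ≠ 0 := by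
      apply one_sub_ne
      rw [norm_mul]
      refine (mul_le_of_le_one_right (norm_nonneg _) ?_).trans_lt hA
      rw [← pow_mul]
      exact pow_norm_le_one _ hQ _
    have n7 : 1 - q ^ 2 * (q ^ 2) ^ m ≠ 0 := by
      apply one_sub_ne
      rw [norm_mul]
      exact (mul_le_of_le_one_right (norm_nonneg _) (pow_norm_le_one _ hQ m)).trans_lt hQ
    rw [pow_succ (q ^ 2) m, mul_comm ((q ^ 2) ^ m) (q ^ 2)]
    generalize aT q a b m = T at *
    generalize (q ^ 2) ^ m = M at *
    generalize q ^ 2 = Q at *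
    field_simp
    ring
  · have t1 : Tendsto (fun n : ℕ => ((1 - a * b * q ^ 2) * (a / (1 - a)) * (1 - (q ^ 2) ^ n))) atTop
        (𝓝 (((1 - a * b * q ^ 2) * (a / (1 - a)) * (1 - 0)))) :=
      ((tendsto_pow_atTop_nhds_zero_of_norm_lt_one hQ).const_sub 1).const_mul _
    simpa using t1.mul s1.tendsto_atTop_zero

theorem qPoch_cont (Q : ℂ) (m : ℕ) : Continuous (fun a => qPoch a Q m) := by
  unfold qPoch
  fun_prop

theorem a_sum (q a b : ℂ) (h1 : ‖q‖ < 1) (ha : ‖a‖ ≤ 1) (hb : ‖b‖ ≤ 1)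
    (ha1 : ∀ N : ℕ, 1 - a * ((q ^ 2) ^ 2) ^ N ≠ 0) :
    qPochInf (a * b * q ^ 2) ((q ^ 2) ^ 2) * ∑' m, aT q a b m =
      qPochInf (a * q ^ 2) ((q ^ 2) ^ 2) * ∑' m, aT q 0 b m := by
  have hQ := sq_norm q h1
  have hQ2 := sq_norm _ hQ
  have haN : ∀ N : ℕ, ‖a * ((q ^ 2) ^ 2) ^ N‖ ≤ 1 := by
    intro N
    rw [norm_mul]; exact (mul_le_of_le_one_right (norm_nonneg _) (pow_norm_le_one _ hQ2 N)).trans ha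
  have hit : ∀ N : ℕ, qPoch (a * b * q ^ 2) ((q ^ 2) ^ 2) N * ∑' m, aT q a b m =
      qPoch (a * q ^ 2) ((q ^ 2) ^ 2) N * ∑' m, aT q (a * ((q ^ 2) ^ 2) ^ N) b m := by
    intro N
    induction N with
    | zero => simp [qPoch_zero]
    | succ N ih =>
      have st := a_step q (a * ((q ^ 2) ^ 2) ^ N) b h1 (haN N) hb (ha1 N)
      rw [show a * ((q ^ 2) ^ 2) ^ N * (q ^ 2) ^ 2 = a * ((q ^ 2) ^ 2) ^ (N + 1) by ring] at st
      rw [qPoch_succ, qPoch_succ]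
      linear_combination (1 - a * b * q ^ 2 * ((q ^ 2) ^ 2) ^ N) * ih +
        qPoch (a * q ^ 2) ((q ^ 2) ^ 2) N * st
  have h2 : 0 < 1 - ‖q‖ := by linarith
  have hlim : Tendsto (fun N : ℕ => ∑' m, aT q (a * ((q ^ 2) ^ 2) ^ N) b m) atTop
      (𝓝 (∑' m, aT q 0 b m)) := by
    refine tendsto_tsum_of_dominated_convergence
      (bound := fun i => ‖q‖ ^ (i * i) * (1 * (2 * 2) * ((1 - ‖q‖)⁻¹ * (1 - ‖q‖)⁻¹)) ^ i)
      (summ_aux _ _ (by positivity) (norm_nonneg _) h1) ?_ ?_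
    · intro k
      have t0 : Tendsto (fun N : ℕ => a * ((q ^ 2) ^ 2) ^ N) atTop (𝓝 0) := by
        simpa using (tendsto_pow_atTop_nhds_zero_of_norm_lt_one hQ2).const_mul a
      have c : ContinuousAt (fun a => aT q a b k) 0 := by
        unfold aT
        have c1 := qPoch_cont (q ^ 2) k
        have c2 : Continuous (fun a : ℂ => qPoch (a * b * q ^ 2) ((q ^ 2) ^ 2) k) :=
          (qPoch_cont ((q ^ 2) ^ 2) k).comp (by fun_prop)
        refine ContinuousAt.div (by fun_prop) (continuous_const.mul c2).continuousAt ?_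
        refine mul_ne_zero (qPoch_ne _ _ hQ hQ k) (qPoch_ne _ _ hQ2 (by simp) k)
      exact c.tendsto.comp t0
    · exact Eventually.of_forall fun N k => aT_bound q _ b h1 (haN N) hb k
  exact tendsto_nhds_unique (((inf_tendsto _ _ hQ2).mul_const _).congr hit)
    ((inf_tendsto _ _ hQ2).mul hlim)

theorem aT_symm (q a b : ℂ) (m : ℕ) : aT q a b m = aT q b a m := by
  simp only [aT, mul_comm a b, mul_comm (qPoch a _ m)]

theorem inf_zero (Q : ℂ) : qPochInf 0 Q = 1 := by simp [qPochInf]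

theorem qPoch_z (Q : ℂ) (m : ℕ) : qPoch 0 Q m = 1 := by simp [qPoch]

theorem a_final (q : ℂ) (h1 : ‖q‖ < 1) :
    qPochInf (q ^ 2) ((q ^ 2) ^ 2) * ∑' m, aT q (-1) (-1) m =
      qPochInf (-q ^ 2) ((q ^ 2) ^ 2) ^ 2 * qPochInf (-q ^ 2) (q ^ 2) := by
  have hne : ∀ N : ℕ, 1 - (-1) * ((q ^ 2) ^ 2) ^ N ≠ 0 := by
    intro N h
    rcases Nat.eq_zero_or_pos N with rfl | hN
    · norm_num at h
    · have : ‖-((q ^ 2) ^ 2) ^ N‖ < 1 := by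
        rw [norm_neg]
        exact pow_norm_lt_one _ (sq_norm _ (sq_norm q h1)) N (by omega)
      exact one_sub_ne _ this (by linear_combination h)
  have e1 := a_sum q (-1) (-1) h1 (by simp) (by simp) hne
  have e2 := a_sum q (-1) 0 h1 (by simp) (by simp) hne
  have e3 : ∑' m, aT q 0 0 m = qPochInf (-q ^ 2) (q ^ 2) := by
    rw [show -q ^ 2 = -(q * q) by ring, ← euler q q h1]
    refine tsum_congr fun m => ?_
    simp [aT, eT, qPoch_z]
  simp only [aT_symm q 0 (-1)] at e1
  norm_num [inf_zero] at e2
  norm_num at e1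
  rw [e1, e2, e3]
  ring

theorem alg2 (b q Q M T : ℂ) (hQ : Q = q ^ 2) (n6 : 1 - b * M ≠ 0) (n8 : 1 - b * M * Q ≠ 0)
    (n7 : 1 - Q ^ 2 * M ^ 2 ≠ 0) :
    (1 - b) * (1 - b * Q) * T - (1 - -(b * q)) ^ 2 * (T * (M ^ 2 * ((1 - b) * (1 - b * Q)) /
      ((1 - b * M) * (1 - b * M * Q)))) =
    -((1 - b) * (1 - b * Q)) * (1 - (M * Q) ^ 2) / (1 - b * M * Q) *
      (T * (b * M * (1 + q * M) ^ 2 / ((1 - Q ^ 2 * M ^ 2) * (1 - b * M)))) -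
    -((1 - b) * (1 - b * Q)) * (1 - M ^ 2) / (1 - b * M) * T := by
  have n8' : 1 - b * Q * M ≠ 0 := by rwa [mul_right_comm] at n8
  have n8'' : 1 - M * b * Q ≠ 0 := by rwa [mul_comm b M] at n8
  have n8''' : 1 - Q * b * M ≠ 0 := by rwa [mul_comm b Q] at n8'
  have n8'''' : 1 - b * (M * Q) ≠ 0 := by rwa [mul_assoc] at n8
  field_simp
  subst hQ
  ring

noncomputable def bT (q w : ℂ) (m : ℕ) : ℂ :=
  q ^ (m * m) * w ^ m * qPoch (-q) (q ^ 2) m ^ 2 /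
    (qPoch ((q ^ 2) ^ 2) ((q ^ 2) ^ 2) m * qPoch (w * q) (q ^ 2) m)

theorem wq_le (q w : ℂ) (hw : ‖w‖ ≤ 1) : ‖w * q‖ ≤ ‖q‖ := by
  rw [norm_mul]
  exact mul_le_of_le_one_left (norm_nonneg _) hw

theorem bT_bound (q w : ℂ) (h1 : ‖q‖ < 1) (hw : ‖w‖ ≤ 1) (i : ℕ) :
    ‖bT q w i‖ ≤ ‖q‖ ^ (i * i) * (‖w‖ * 2 ^ 2 * ((1 - ‖q‖)⁻¹ * (1 - ‖q‖)⁻¹)) ^ i := by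
  have hQ := sq_norm q h1
  have e1 := qPoch_inv_le ((q ^ 2) ^ 2) ((q ^ 2) ^ 2) ‖q‖ (sq_norm _ hQ) h1
    ((nsq_le _ hQ).trans (nsq_le q h1)) i
  have e2 := qPoch_inv_le (w * q) (q ^ 2) ‖q‖ hQ h1 (wq_le q w hw) i
  have e3 := qPoch_norm_le (-q) (q ^ 2) hQ (by rw [norm_neg]; exact h1.le) i
  have h2 : 0 < 1 - ‖q‖ := by linarith
  have e6 : ‖bT q w i‖ = ‖q‖ ^ (i * i) * (‖w‖ ^ i * ‖qPoch (-q) (q ^ 2) i‖ ^ 2 *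
      (‖qPoch ((q ^ 2) ^ 2) ((q ^ 2) ^ 2) i‖⁻¹ * ‖qPoch (w * q) (q ^ 2) i‖⁻¹)) := by
    simp only [bT, norm_inv, norm_mul, norm_pow, div_eq_mul_inv, mul_inv]
    ring
  rw [e6]
  simp only [mul_pow]
  rw [pow_right_comm (2 : ℝ) 2 i]
  gcongr

theorem bT_summable (q w : ℂ) (h1 : ‖q‖ < 1) (hw : ‖w‖ ≤ 1) : Summable (bT q w) := by
  have h2 : 0 < 1 - ‖q‖ := by linarith
  exact Summable.of_norm_bounded (summ_aux _ _ (by positivity) (norm_nonneg _) h1)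
    (bT_bound q w h1 hw)

theorem bT_succ (q w : ℂ) (m : ℕ) : bT q w (m + 1) =
    bT q w m * (w * q * (q ^ 2) ^ m * (1 + q * (q ^ 2) ^ m) ^ 2 /
      ((1 - (q ^ 2) ^ 2 * ((q ^ 2) ^ m) ^ 2) * (1 - w * q * (q ^ 2) ^ m))) := by
  simp only [bT, qPoch_succ]
  rw [div_mul_div_comm]
  congr 1
  · ring
  · ring

theorem bT_shift (q w : ℂ) (h1 : ‖q‖ < 1) (hw : ‖w‖ ≤ 1) (m : ℕ) : bT q (w * (q ^ 2) ^ 2) m =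
    bT q w m * (((q ^ 2) ^ m) ^ 2 * ((1 - w * q) * (1 - w * q * q ^ 2)) /
      ((1 - w * q * (q ^ 2) ^ m) * (1 - w * q * (q ^ 2) ^ m * q ^ 2))) := by
  have hQ := sq_norm q h1
  have hb := (wq_le q w hw).trans_lt h1
  have n1 := one_sub_ne _ hb
  have hh : ‖w * q * q ^ 2‖ < 1 := by
    rw [norm_mul]; exact (mul_le_of_le_one_left (norm_nonneg _) hb.le).trans_lt hQ
  have n2 := one_sub_ne _ hh
  have s1 := qPoch_shift (w * q) (q ^ 2) m
  have s2 := qPoch_shift (w * q * q ^ 2) (q ^ 2) m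
  have r1 : qPoch (w * (q ^ 2) ^ 2 * q) (q ^ 2) m = qPoch (w * q) (q ^ 2) m *
      ((1 - w * q * (q ^ 2) ^ m) * (1 - w * q * (q ^ 2) ^ m * q ^ 2)) /
        ((1 - w * q) * (1 - w * q * q ^ 2)) := by
    rw [eq_div_iff (mul_ne_zero n1 n2)]
    rw [show w * (q ^ 2) ^ 2 * q = w * q * q ^ 2 * q ^ 2 by ring]
    linear_combination (1 - w * q) * s2 + (1 - w * q * (q ^ 2) ^ m * q ^ 2) * s1
  simp only [bT]
  rw [r1, show (w * (q ^ 2) ^ 2) ^ m = w ^ m * ((q ^ 2) ^ m) ^ 2 by ring]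
  simp only [div_eq_mul_inv, mul_inv, inv_inv]
  ring

theorem b_step (q w : ℂ) (h1 : ‖q‖ < 1) (hw : ‖w‖ ≤ 1) :
    ((1 - w * q) * (1 - w * q * q ^ 2)) * ∑' m, bT q w m =
      (1 - (-(w * q * q))) ^ 2 * ∑' m, bT q (w * (q ^ 2) ^ 2) m := by
  have hQ := sq_norm q h1
  have hb := (wq_le q w hw).trans_lt h1
  have hbM : ∀ m, ‖w * q * (q ^ 2) ^ m‖ < 1 := by
    intro m
    rw [norm_mul]
    exact (mul_le_of_le_one_right (norm_nonneg _) (pow_norm_le_one _ hQ m)).trans_lt hb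
  have hw' : ‖w * (q ^ 2) ^ 2‖ ≤ 1 := by
    rw [norm_mul]; exact (mul_le_of_le_one_right (norm_nonneg _) (pow_norm_le_one _ hQ 2)).trans hw
  have s1 := bT_summable q w h1 hw
  have s2 := bT_summable q _ h1 hw'
  rw [← sub_eq_zero, ← tsum_mul_left, ← tsum_mul_left, ← (s1.mul_left _).tsum_sub (s2.mul_left _)]
  refine telesc _ (fun n => (-((1 - w * q) * (1 - w * q * q ^ 2)) * (1 - ((q ^ 2) ^ n) ^ 2) /
    (1 - w * q * (q ^ 2) ^ n)) * bT q w n)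
    ((s1.mul_left _).sub (s2.mul_left _)) ?_ (by simp) ?_
  · intro m
    rw [bT_shift q w h1 hw, bT_succ]
    have n6 := one_sub_ne _ (hbM m)
    have n8 := one_sub_ne _ (hbM (m + 1))
    have n7 : 1 - (q ^ 2) ^ 2 * ((q ^ 2) ^ m) ^ 2 ≠ 0 := by
      apply one_sub_ne
      rw [show (q ^ 2) ^ 2 * ((q ^ 2) ^ m) ^ 2 = (q ^ 2) ^ (2 * (m + 1)) by ring]
      exact pow_norm_lt_one _ hQ _ (by omega)
    rw [pow_succ (q ^ 2) m] at n8 ⊢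
    rw [← mul_assoc] at n8
    rw [show w * q * ((q ^ 2) ^ m * q ^ 2) = w * q * (q ^ 2) ^ m * q ^ 2 by ring]
    generalize bT q w m = T at *
    generalize (q ^ 2) ^ m = M at *
    generalize w * q = b at *
    exact alg2 b q (q ^ 2) M T rfl n6 n8 n7
  · have t0 := tendsto_pow_atTop_nhds_zero_of_norm_lt_one hQ
    have t1 : Tendsto (fun n : ℕ => (-((1 - w * q) * (1 - w * q * q ^ 2)) * (1 - ((q ^ 2) ^ n) ^ 2) /
        (1 - w * q * (q ^ 2) ^ n))) atTop
        (𝓝 (-((1 - w * q) * (1 - w * q * q ^ 2)) * (1 - 0 ^ 2) / (1 - w * q * 0))) :=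
      (((t0.pow 2).const_sub 1).const_mul _).div ((t0.const_mul _).const_sub 1) (by simp)
    simpa using t1.mul s1.tendsto_atTop_zero

theorem b_sum (q w : ℂ) (h1 : ‖q‖ < 1) (hw : ‖w‖ ≤ 1) :
    qPochInf (w * q) (q ^ 2) * ∑' m, bT q w m =
      qPochInf (-(w * q * q)) ((q ^ 2) ^ 2) ^ 2 := by
  have hQ := sq_norm q h1
  have hQ2 := sq_norm _ hQ
  have haN : ∀ N : ℕ, ‖w * ((q ^ 2) ^ 2) ^ N‖ ≤ 1 := by
    intro N
    rw [norm_mul]; exact (mul_le_of_le_one_right (norm_nonneg _) (pow_norm_le_one _ hQ2 N)).trans hw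
  have hit : ∀ N : ℕ, qPoch (w * q) (q ^ 2) (2 * N) * ∑' m, bT q w m =
      qPoch (-(w * q * q)) ((q ^ 2) ^ 2) N ^ 2 * ∑' m, bT q (w * ((q ^ 2) ^ 2) ^ N) m := by
    intro N
    induction N with
    | zero => simp [qPoch_zero]
    | succ N ih =>
      have st := b_step q (w * ((q ^ 2) ^ 2) ^ N) h1 (haN N)
      rw [show w * ((q ^ 2) ^ 2) ^ N * (q ^ 2) ^ 2 = w * ((q ^ 2) ^ 2) ^ (N + 1) by ring] at st
      rw [show 2 * (N + 1) = 2 * N + 1 + 1 by ring, qPoch_succ, qPoch_succ, qPoch_succ]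
      rw [show (q ^ 2) ^ (2 * N + 1) = ((q ^ 2) ^ 2) ^ N * q ^ 2 by ring,
        show (q ^ 2) ^ (2 * N) = ((q ^ 2) ^ 2) ^ N by ring]
      linear_combination (1 - w * ((q ^ 2) ^ 2) ^ N * q) * (1 - w * ((q ^ 2) ^ 2) ^ N * q * q ^ 2) * ih +
        qPoch (-(w * q * q)) ((q ^ 2) ^ 2) N ^ 2 * st
  have h2 : 0 < 1 - ‖q‖ := by linarith
  have hlim : Tendsto (fun N : ℕ => ∑' m, bT q (w * ((q ^ 2) ^ 2) ^ N) m) atTop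
      (𝓝 (∑' m, bT q 0 m)) := by
    refine tendsto_tsum_of_dominated_convergence
      (bound := fun i => ‖q‖ ^ (i * i) * (1 * 2 ^ 2 * ((1 - ‖q‖)⁻¹ * (1 - ‖q‖)⁻¹)) ^ i)
      (summ_aux _ _ (by positivity) (norm_nonneg _) h1) ?_ ?_
    · intro k
      have t0 : Tendsto (fun N : ℕ => w * ((q ^ 2) ^ 2) ^ N) atTop (𝓝 0) := by
        simpa using (tendsto_pow_atTop_nhds_zero_of_norm_lt_one hQ2).const_mul w
      have c : ContinuousAt (fun w => bT q w k) 0 := by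
        unfold bT
        have c2 : Continuous (fun w : ℂ => qPoch (w * q) (q ^ 2) k) :=
          (qPoch_cont (q ^ 2) k).comp (by fun_prop)
        refine ContinuousAt.div (by fun_prop) (continuous_const.mul c2).continuousAt ?_
        refine mul_ne_zero (qPoch_ne _ _ hQ2 hQ2 k) (qPoch_ne _ _ hQ (by simp) k)
      exact c.tendsto.comp t0
    · refine Eventually.of_forall fun N k => (bT_bound q _ h1 (haN N) k).trans ?_
      have := haN N
      gcongr
  have hz : ∑' i, bT q 0 i = 1 := by
    rw [tsum_eq_single 0]
    · simp [bT, qPoch_zero]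
    · intro i hi
      simp [bT, hi]
  rw [hz] at hlim
  have := ((inf_tendsto (-(w * q * q)) _ hQ2).pow 2).mul hlim
  rw [mul_one] at this
  exact tendsto_nhds_unique ((((inf_tendsto (w * q) _ hQ).comp tendsto_two).mul_const _).congr hit) this

theorem V_lem (q : ℂ) (h0 : q ≠ 0) (h1 : ‖q‖ < 1) (m : ℕ) :
    qPochInf (-(q ^ (2 - 2 * (m : ℤ)))) (q ^ 2) * q ^ ((m : ℤ) * (m - 1)) =
      qPoch (-1) (q ^ 2) m * qPochInf (-q ^ 2) (q ^ 2) := by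
  induction m with
  | zero => simp [qPoch_zero]
  | succ m ih =>
    rw [inf_succ _ _ (sq_norm q h1), qPoch_succ]
    have e1 : -(q ^ (2 - 2 * ((m + 1 : ℕ) : ℤ))) * q ^ 2 = -(q ^ (2 - 2 * (m : ℤ))) := by
      rw [neg_mul, ← zpow_natCast q 2, ← zpow_add₀ h0]
      congr 2
      push_cast
      ring
    have e2 : q ^ (((m + 1 : ℕ) : ℤ) * (((m + 1 : ℕ) : ℤ) - 1)) =
        q ^ ((m : ℤ) * (m - 1)) * q ^ (2 * (m : ℤ)) := by
      rw [← zpow_add₀ h0]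
      congr 1
      push_cast
      ring
    have e3 : q ^ (2 - 2 * ((m + 1 : ℕ) : ℤ)) * q ^ (2 * (m : ℤ)) = 1 := by
      rw [← zpow_add₀ h0]
      push_cast
      ring_nf
      simp
    have e4 : q ^ (2 * (m : ℤ)) = (q ^ 2) ^ m := by
      rw [← pow_mul, ← zpow_natCast]; push_cast; rfl
    rw [e4] at e2 e3
    rw [e1, e2]
    linear_combination (1 + (q ^ 2) ^ m) * ih + qPochInf (-(q ^ (2 - 2 * (m : ℤ)))) (q ^ 2) *
      q ^ ((m : ℤ) * (m - 1)) * e3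

theorem W_lem (q : ℂ) (h0 : q ≠ 0) (h1 : ‖q‖ < 1) (m : ℕ) :
    qPochInf (-(q ^ (1 - 2 * (m : ℤ)))) (q ^ 2) * q ^ ((m : ℤ) * m) =
      qPoch (-q) (q ^ 2) m * qPochInf (-q) (q ^ 2) := by
  induction m with
  | zero => simp [qPoch_zero]
  | succ m ih =>
    rw [inf_succ _ _ (sq_norm q h1), qPoch_succ]
    have e1 : -(q ^ (1 - 2 * ((m + 1 : ℕ) : ℤ))) * q ^ 2 = -(q ^ (1 - 2 * (m : ℤ))) := by
      rw [neg_mul, ← zpow_natCast q 2, ← zpow_add₀ h0]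
      congr 2
      push_cast
      ring
    have e2 : q ^ (((m + 1 : ℕ) : ℤ) * ((m + 1 : ℕ) : ℤ)) =
        q ^ ((m : ℤ) * m) * q ^ (2 * (m : ℤ) + 1) := by
      rw [← zpow_add₀ h0]
      congr 1
      push_cast
      ring
    have e3 : q ^ (1 - 2 * ((m + 1 : ℕ) : ℤ)) * q ^ (2 * (m : ℤ) + 1) = 1 := by
      rw [← zpow_add₀ h0]
      push_cast
      ring_nf
      simp
    have e4 : q ^ (2 * (m : ℤ) + 1) = q * (q ^ 2) ^ m := by
      rw [← pow_mul, ← pow_succ', ← zpow_natCast]; push_cast; rfl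
    rw [e4] at e2 e3
    rw [e1, e2]
    linear_combination (1 + q * (q ^ 2) ^ m) * ih + qPochInf (-(q ^ (1 - 2 * (m : ℤ)))) (q ^ 2) *
      q ^ ((m : ℤ) * m) * e3

noncomputable def lT (q : ℂ) (l : ℕ) : ℂ :=
  qPochInf (-(q ^ (-(l : ℤ)))) (q ^ 2) * qPochInf (-(q ^ (2 - (l : ℤ)))) (q ^ 2) ^ 2 *
    q ^ ((l : ℤ) * l) / qPoch (q ^ 2) (q ^ 2) l

theorem lT_even (q : ℂ) (h0 : q ≠ 0) (h1 : ‖q‖ < 1) (m : ℕ) :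
    lT q (2 * m) = 2 * qPochInf (-q ^ 2) (q ^ 2) ^ 3 * aT q (-1) (-1) m := by
  have hQ := sq_norm q h1
  have v0 := V_lem q h0 h1 m
  have v1 := V_lem q h0 h1 (m + 1)
  have c1 : (2 - 2 * ((m + 1 : ℕ) : ℤ)) = -((2 * m : ℕ) : ℤ) := by push_cast; ring
  have c2 : (2 - 2 * (m : ℤ)) = 2 - ((2 * m : ℕ) : ℤ) := by push_cast; ring
  rw [c1, qPoch_succ'] at v1
  rw [c2] at v0
  have d := qPoch_split (q ^ 2) (q ^ 2) m
  have d2 := qPoch_neg (q ^ 2) (q ^ 2) m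
  rw [← pow_two (q ^ 2), ← d2] at d
  have hne := qPoch_ne (q ^ 2) (q ^ 2) hQ hQ (2 * m)
  have p1 : q ^ (((2 * m : ℕ) : ℤ) * ((2 * m : ℕ) : ℤ)) =
      q ^ (((m + 1 : ℕ) : ℤ) * (((m + 1 : ℕ) : ℤ) - 1)) * (q ^ ((m : ℤ) * (m - 1))) ^ 2 *
        (q ^ (m * m) * q ^ m) := by
    rw [pow_two, ← zpow_natCast q (m * m), ← zpow_natCast q m]
    simp only [← zpow_add₀ h0]
    congr 1
    push_cast
    ring
  rw [lT, aT, p1]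
  rw [← d] at hne ⊢
  have hS := left_ne_zero_of_mul hne
  have hR := left_ne_zero_of_mul (right_ne_zero_of_mul hne)
  have hN := right_ne_zero_of_mul (right_ne_zero_of_mul hne)
  rw [show (-1 : ℂ) * -1 * q ^ 2 = q ^ 2 by ring]
  rw [show (-1 : ℂ) * q ^ 2 = -q ^ 2 by ring] at v1
  generalize q ^ (((m + 1 : ℕ) : ℤ) * (((m + 1 : ℕ) : ℤ) - 1)) = u at *
  generalize q ^ ((m : ℤ) * (m - 1)) = v at *
  generalize q ^ (m * m) * q ^ m = c at *
  generalize qPochInf (-(q ^ (-((2 * m : ℕ) : ℤ)))) (q ^ 2) = A at *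
  generalize qPochInf (-(q ^ (2 - ((2 * m : ℕ) : ℤ)))) (q ^ 2) = B at *
  generalize qPochInf (-q ^ 2) (q ^ 2) = X at *
  generalize qPoch (-q ^ 2) (q ^ 2) m = N at *
  generalize qPoch (-1) (q ^ 2) m = D at *
  generalize qPoch (q ^ 2) (q ^ 2) m = R at *
  generalize qPoch (q ^ 2) ((q ^ 2) ^ 2) m = S at *
  rw [show A * B ^ 2 * (u * v ^ 2 * c) = (A * u) * (B * v) ^ 2 * c by ring, v0, v1]
  field_simp
  ring

theorem lT_odd (q : ℂ) (h0 : q ≠ 0) (h1 : ‖q‖ < 1) (m : ℕ) :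
    lT q (2 * m + 1) = qPochInf (-q) (q ^ 2) ^ 3 / (1 - q) * bT q (q ^ 2) m := by
  have hQ := sq_norm q h1
  have v0 := W_lem q h0 h1 m
  have v1 := W_lem q h0 h1 (m + 1)
  have c1 : (1 - 2 * ((m + 1 : ℕ) : ℤ)) = -((2 * m + 1 : ℕ) : ℤ) := by push_cast; ring
  have c2 : (1 - 2 * (m : ℤ)) = 2 - ((2 * m + 1 : ℕ) : ℤ) := by push_cast; ring
  rw [c1] at v1
  rw [c2] at v0
  have d : qPoch (q ^ 2) (q ^ 2) (2 * m + 1) = qPoch (q ^ 2) ((q ^ 2) ^ 2) (m + 1) *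
      qPoch ((q ^ 2) ^ 2) ((q ^ 2) ^ 2) m := by
    have := qPoch_split (q ^ 2) (q ^ 2) m
    rw [← pow_two (q ^ 2)] at this
    rw [qPoch_succ, ← this, qPoch_succ, ← pow_mul (q ^ 2) 2 m]
    ring
  have d2 := qPoch_neg q (q ^ 2) (m + 1)
  rw [← d2, qPoch_succ' q] at d
  have hne := qPoch_ne (q ^ 2) (q ^ 2) hQ hQ (2 * m + 1)
  have p1 : q ^ (((2 * m + 1 : ℕ) : ℤ) * ((2 * m + 1 : ℕ) : ℤ)) =
      q ^ (((m + 1 : ℕ) : ℤ) * ((m + 1 : ℕ) : ℤ)) * (q ^ ((m : ℤ) * m)) ^ 2 *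
        (q ^ (m * m) * (q ^ 2) ^ m) := by
    rw [pow_two, ← pow_mul, ← zpow_natCast q (m * m), ← zpow_natCast q (2 * m)]
    simp only [← zpow_add₀ h0]
    congr 1
    push_cast
    ring
  rw [lT, bT, p1]
  rw [d] at hne ⊢
  rw [mul_comm q (q ^ 2)] at hne ⊢
  have hS := right_ne_zero_of_mul hne
  have hR := right_ne_zero_of_mul (left_ne_zero_of_mul hne)
  have hN := right_ne_zero_of_mul (left_ne_zero_of_mul (left_ne_zero_of_mul hne))
  have hq1 := left_ne_zero_of_mul (left_ne_zero_of_mul (left_ne_zero_of_mul hne))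
  generalize q ^ (((m + 1 : ℕ) : ℤ) * ((m + 1 : ℕ) : ℤ)) = u at *
  generalize q ^ ((m : ℤ) * m) = v at *
  generalize q ^ (m * m) * (q ^ 2) ^ m = c at *
  generalize qPochInf (-(q ^ (-((2 * m + 1 : ℕ) : ℤ)))) (q ^ 2) = A at *
  generalize qPochInf (-(q ^ (2 - ((2 * m + 1 : ℕ) : ℤ)))) (q ^ 2) = B at *
  generalize qPochInf (-q) (q ^ 2) = X at *
  generalize qPoch (-q) (q ^ 2) (m + 1) = N at *
  generalize qPoch (-q) (q ^ 2) m = D at *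
  generalize qPoch (q ^ 2 * q) (q ^ 2) m = R at *
  generalize qPoch ((q ^ 2) ^ 2) ((q ^ 2) ^ 2) m = S at *
  rw [show A * B ^ 2 * (u * v ^ 2 * c) = (A * u) * (B * v) ^ 2 * c by ring, v0, v1]
  field_simp

theorem lT_sum (q : ℂ) (h0 : q ≠ 0) (h1 : ‖q‖ < 1) :
    ∑' l, lT q l = 2 * qPochInf (-q ^ 2) (q ^ 2) ^ 3 * ∑' m, aT q (-1) (-1) m +
      qPochInf (-q) (q ^ 2) ^ 3 / (1 - q) * ∑' m, bT q (q ^ 2) m := by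
  have s1 := (aT_summable q (-1) (-1) h1 (by simp) (by simp)).mul_left
    (2 * qPochInf (-q ^ 2) (q ^ 2) ^ 3)
  have s2 := (bT_summable q (q ^ 2) h1 (sq_norm q h1).le).mul_left
    (qPochInf (-q) (q ^ 2) ^ 3 / (1 - q))
  rw [← tsum_mul_left, ← tsum_mul_left, ← tsum_even_add_odd]
  · simp only [lT_even q h0 h1, lT_odd q h0 h1]
  · simpa only [lT_even q h0 h1] using s1
  · simpa only [lT_odd q h0 h1] using s2

theorem J_form (q : ℂ) (h1 : ‖q‖ < 1) :
    2 * qPochInf (-q ^ 2) (q ^ 2) ^ 3 * ∑' m, aT q (-1) (-1) m +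
      qPochInf (-q) (q ^ 2) ^ 3 / (1 - q) * ∑' m, bT q (q ^ 2) m =
    2 * (J q 4)^9 / ((J q 2)^7 * (J q 8)^2)
      + (J q 2)^7 * (J q 8)^2 / ((J q 1)^4 * (J q 4)^5) := by
  have hQ := sq_norm q h1
  have hQ2 := sq_norm _ hQ
  have hQ4 := sq_norm _ hQ2
  have ea := a_final q h1
  have eb := b_sum q (q ^ 2) h1 hQ.le
  have f1 := inf_neg (q ^ 2) (q ^ 2) hQ
  have f2 := inf_neg (q ^ 2) ((q ^ 2) ^ 2) hQ2
  have f3 := inf_split (q ^ 2) (q ^ 2) hQ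
  have f4 := inf_split ((q ^ 2) ^ 2) ((q ^ 2) ^ 2) hQ2
  have f5 := inf_neg q (q ^ 2) hQ
  have f6 := inf_split q q h1
  have f7 := inf_neg ((q ^ 2) ^ 2) ((q ^ 2) ^ 2) hQ2
  have f8 := inf_succ q (q ^ 2) hQ
  have n1 := inf_ne' q q h1 h1
  have n2 := inf_ne' _ _ hQ hQ
  have n4 := inf_ne' _ _ hQ2 hQ2
  have n8 := inf_ne' _ _ hQ4 hQ4
  have m1 := inf_ne' q (q ^ 2) hQ h1
  have m2 := inf_ne' (q ^ 2) ((q ^ 2) ^ 2) hQ2 hQ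
  have m4 := inf_ne' ((q ^ 2) ^ 2) (((q ^ 2) ^ 2) ^ 2) hQ4 hQ2
  simp only [J]
  rw [show q ^ 8 = ((q ^ 2) ^ 2) ^ 2 by ring, show q ^ 4 = (q ^ 2) ^ 2 by ring, pow_one]
  rw [← pow_two (q ^ 2)] at f3
  rw [← pow_two ((q ^ 2) ^ 2)] at f4
  rw [← pow_two q] at f6
  rw [show -(q ^ 2 * q * q) = -(q ^ 2) ^ 2 by ring] at eb
  rw [mul_comm q (q ^ 2)] at f8
  generalize ∑' m, aT q (-1) (-1) m = SA at *
  generalize ∑' m, bT q (q ^ 2) m = SB at *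
  generalize qPochInf (((q ^ 2) ^ 2) ^ 2) (((q ^ 2) ^ 2) ^ 2) = J8 at *
  generalize qPochInf ((q ^ 2) ^ 2) (((q ^ 2) ^ 2) ^ 2) = K4 at *
  generalize qPochInf ((q ^ 2) ^ 2) ((q ^ 2) ^ 2) = J4 at *
  generalize qPochInf (-(q ^ 2) ^ 2) ((q ^ 2) ^ 2) = V at *
  generalize qPochInf (q ^ 2) ((q ^ 2) ^ 2) = K2 at *
  generalize qPochInf (-q ^ 2) ((q ^ 2) ^ 2) = Y at *
  generalize qPochInf (q ^ 2) (q ^ 2) = J2 at *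
  generalize qPochInf (-q ^ 2) (q ^ 2) = X at *
  generalize qPochInf (q ^ 2 * q) (q ^ 2) = L at *
  generalize qPochInf q (q ^ 2) = K1 at *
  generalize qPochInf (-q) (q ^ 2) = Z at *
  generalize qPochInf q q = J1 at *
  have hq1 := one_sub_ne q h1
  have hX : X = J4 / J2 := by rw [eq_div_iff n2]; linear_combination f1
  have hK2 : K2 = J2 / J4 := by rw [eq_div_iff n4]; linear_combination f3
  have hK4 : K4 = J4 / J8 := by rw [eq_div_iff n8]; linear_combination f4
  have hK1 : K1 = J1 / J2 := by rw [eq_div_iff n2]; linear_combination f6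
  have hV : V = J8 / J4 := by rw [eq_div_iff n4]; linear_combination f7
  have hY : Y = K4 / K2 := by rw [eq_div_iff m2]; linear_combination f2
  have hZ : Z = K2 / K1 := by rw [eq_div_iff m1]; linear_combination f5
  have hL : L ≠ 0 := by
    intro h
    rw [h, mul_zero] at f8
    exact m1 f8
  have hSA : SA = Y ^ 2 * X / K2 := by rw [eq_div_iff m2]; linear_combination ea
  have hSB : SB / (1 - q) = V ^ 2 / K1 := by
    rw [f8]
    field_simp
    linear_combination eb
  congr 1
  · rw [hSA, hY, hX, hK4, hK2]
    field_simp
  · rw [div_mul_eq_mul_div, mul_div_assoc, hSB, hZ, hV, hK1, hK2]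
    field_simp

theorem term_eq (q : ℂ) (h0 : q ≠ 0) (i j k l : ℕ) :
    q ^ (((i:ℤ)^2 + (j:ℤ)^2 + (k:ℤ)^2 + (l:ℤ)^2 - (i:ℤ)*(l:ℤ) - (j:ℤ)*(l:ℤ) - (k:ℤ)*(l:ℤ) - (i:ℤ) + (j:ℤ) + (k:ℤ)) : ℤ) /
          (qPoch (q ^ 2) (q ^ 2) i * qPoch (q ^ 2) (q ^ 2) j * qPoch (q ^ 2) (q ^ 2) k * qPoch (q ^ 2) (q ^ 2) l)
    = (q ^ ((l : ℤ) * l) / qPoch (q ^ 2) (q ^ 2) l) * (eT q (q ^ (-1 - (l : ℤ))) i *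
      (eT q (q ^ (1 - (l : ℤ))) j * eT q (q ^ (1 - (l : ℤ))) k)) := by
  have : q ^ (((i:ℤ)^2 + (j:ℤ)^2 + (k:ℤ)^2 + (l:ℤ)^2 - (i:ℤ)*(l:ℤ) - (j:ℤ)*(l:ℤ) - (k:ℤ)*(l:ℤ) - (i:ℤ) + (j:ℤ) + (k:ℤ)) : ℤ)
    = q ^ ((l : ℤ) * l) * ((q ^ (i * i) * (q ^ (-1 - (l : ℤ))) ^ i) *
      ((q ^ (j * j) * (q ^ (1 - (l : ℤ))) ^ j) * (q ^ (k * k) * (q ^ (1 - (l : ℤ))) ^ k))) := by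
    rw [← zpow_natCast q (i * i), ← zpow_natCast q (j * j), ← zpow_natCast q (k * k),
      ← zpow_natCast _ i, ← zpow_natCast _ j, ← zpow_natCast _ k]
    simp only [← zpow_mul, ← zpow_add₀ h0]
    congr 1
    push_cast
    ring
  rw [this]
  simp only [eT, div_eq_mul_inv, mul_inv]
  ring

theorem main_summable (q : ℂ) (h0 : q ≠ 0) (h1 : ‖q‖ < 1) :
    Summable (fun p : ℕ × ℕ × ℕ × ℕ =>
      (fun (i j k l : ℕ) =>
        q ^ (((i:ℤ)^2 + (j:ℤ)^2 + (k:ℤ)^2 + (l:ℤ)^2 - (i:ℤ)*(l:ℤ) - (j:ℤ)*(l:ℤ) - (k:ℤ)*(l:ℤ) - (i:ℤ) + (j:ℤ) + (k:ℤ)) : ℤ) /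
          (qPoch (q ^ 2) (q ^ 2) i * qPoch (q ^ 2) (q ^ 2) j * qPoch (q ^ 2) (q ^ 2) k * qPoch (q ^ 2) (q ^ 2) l))
        p.1 p.2.1 p.2.2.1 p.2.2.2) := by
  have hr : 0 < ‖q‖ := norm_pos_iff.mpr h0
  have h2 : 0 < 1 - ‖q‖ := by linarith
  obtain ⟨s, hs0, hs1, hs8⟩ : ∃ s : ℝ, 0 < s ∧ s < 1 ∧ s ^ 8 = ‖q‖ := by
    refine ⟨‖q‖ ^ (1 / 8 : ℝ), by positivity, Real.rpow_lt_one hr.le h1 (by norm_num), ?_⟩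
    rw [← Real.rpow_natCast, ← Real.rpow_mul hr.le]
    norm_num
  set g : ℕ → ℝ := fun n => s ^ (n * n) * ((s ^ 8)⁻¹ * (1 - ‖q‖)⁻¹) ^ n with hg
  have gs : Summable g := summ_aux _ _ (by positivity) hs0.le hs1
  have g0 : ∀ n, 0 ≤ g n := fun n => by positivity
  have gs2 : Summable (fun p : ℕ × ℕ => g p.1 * g p.2) := gs.mul_of_nonneg gs g0 g0
  have gs3 : Summable (fun p : ℕ × ℕ × ℕ => g p.1 * (g p.2.1 * g p.2.2)) :=
    gs.mul_of_nonneg gs2 g0 (fun p => mul_nonneg (g0 _) (g0 _))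
  have gs4 : Summable (fun p : ℕ × ℕ × ℕ × ℕ => g p.1 * (g p.2.1 * (g p.2.2.1 * g p.2.2.2))) :=
    gs.mul_of_nonneg gs3 g0 (fun p => mul_nonneg (g0 _) (mul_nonneg (g0 _) (g0 _)))
  refine Summable.of_norm_bounded gs4 ?_
  rintro ⟨i, j, k, l⟩
  dsimp only
  have e := fun n => qPoch_inv_le (q ^ 2) (q ^ 2) ‖q‖ (sq_norm q h1) h1 (nsq_le q h1) n
  rw [norm_div, div_eq_mul_inv, norm_mul, norm_mul, norm_mul, mul_inv, mul_inv, mul_inv, norm_zpow]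
  have hE : ‖q‖ ^ (((i:ℤ)^2 + (j:ℤ)^2 + (k:ℤ)^2 + (l:ℤ)^2 - (i:ℤ)*(l:ℤ) - (j:ℤ)*(l:ℤ) - (k:ℤ)*(l:ℤ) - (i:ℤ) + (j:ℤ) + (k:ℤ)) : ℤ)
      ≤ (s ^ (i * i) * (s ^ 8)⁻¹ ^ i) * (s ^ (j * j) * (s ^ 8)⁻¹ ^ j) *
        (s ^ (k * k) * (s ^ 8)⁻¹ ^ k) * (s ^ (l * l) * (s ^ 8)⁻¹ ^ l) := by
    have hn : ∀ n : ℕ, s ^ (n * n) * (s ^ 8)⁻¹ ^ n = s ^ ((n : ℤ) * n - 8 * n) := by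
      intro n
      rw [zpow_sub₀ hs0.ne', inv_pow, ← pow_mul, div_eq_mul_inv, ← zpow_natCast, ← zpow_natCast]
      push_cast
      rfl
    simp only [hn, ← zpow_add₀ hs0.ne']
    rw [← hs8, ← zpow_natCast s 8, ← zpow_mul]
    apply zpow_le_zpow_right_of_le_one₀ hs0 hs1.le
    push_cast
    have hj : (0 : ℤ) ≤ j := by positivity
    have hk : (0 : ℤ) ≤ k := by positivity
    have hl : (0 : ℤ) ≤ l := by positivity
    nlinarith [sq_nonneg (7 * (i : ℤ) - 4 * l), sq_nonneg (7 * (j : ℤ) - 4 * l),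
      sq_nonneg (7 * (k : ℤ) - 4 * l), sq_nonneg (l : ℤ)]
  calc _ ≤ ((s ^ (i * i) * (s ^ 8)⁻¹ ^ i) * (s ^ (j * j) * (s ^ 8)⁻¹ ^ j) *
        (s ^ (k * k) * (s ^ 8)⁻¹ ^ k) * (s ^ (l * l) * (s ^ 8)⁻¹ ^ l)) *
        ((1 - ‖q‖)⁻¹ ^ i * (1 - ‖q‖)⁻¹ ^ j * (1 - ‖q‖)⁻¹ ^ k * (1 - ‖q‖)⁻¹ ^ l) := by
        gcongr
        · exact e i
        · exact e j
        · exact e k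
        · exact e l
    _ = _ := by
        simp only [hg, mul_pow]
        ring

def reord : ℕ × ℕ × ℕ × ℕ ≃ ℕ × ℕ × ℕ × ℕ where
  toFun p := (p.2.1, p.2.2.1, p.2.2.2, p.1)
  invFun p := (p.2.2.2, p.1, p.2.1, p.2.2.1)
  left_inv _ := rfl
  right_inv _ := rfl

theorem stmt_1 (q : ℂ) (h0 : 0 < ‖q‖) (h1 : ‖q‖ < 1) :
    (∑' p : ℕ × ℕ × ℕ × ℕ,
      (fun (i j k l : ℕ) =>
        q ^ (((i:ℤ)^2 + (j:ℤ)^2 + (k:ℤ)^2 + (l:ℤ)^2 - (i:ℤ)*(l:ℤ) - (j:ℤ)*(l:ℤ) - (k:ℤ)*(l:ℤ) - (i:ℤ) + (j:ℤ) + (k:ℤ)) : ℤ) /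
          (qPoch (q ^ 2) (q ^ 2) i * qPoch (q ^ 2) (q ^ 2) j * qPoch (q ^ 2) (q ^ 2) k * qPoch (q ^ 2) (q ^ 2) l))
        p.1 p.2.1 p.2.2.1 p.2.2.2)
    = 2 * (J q 4)^9 / ((J q 2)^7 * (J q 8)^2)
      + (J q 2)^7 * (J q 8)^2 / ((J q 1)^4 * (J q 4)^5) := by
  have hq : q ≠ 0 := norm_pos_iff.mp h0
  have hs := main_summable q hq h1
  rw [← J_form q h1, ← lT_sum q hq h1, ← reord.tsum_eq]
  have hs' := reord.summable_iff.mpr hs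
  refine (Summable.tsum_prod hs').trans ?_
  refine tsum_congr fun l => ?_
  simp only [reord, Function.comp_apply, Equiv.coe_fn_mk, term_eq q hq]
  rw [tsum_mul_left]
  have n1 := eT_summable_norm q (q ^ (-1 - (l : ℤ))) h1
  have n2 := eT_summable_norm q (q ^ (1 - (l : ℤ))) h1
  have n3 := n2.mul_norm n2
  have t1 := tsum_mul_tsum_of_summable_norm n2 n2
  have t2 := tsum_mul_tsum_of_summable_norm n1 n3
  rw [← t2, ← t1, euler q _ h1, euler q _ h1, lT]
  have z1 : q ^ (-1 - (l : ℤ)) * q = q ^ (-(l : ℤ)) := by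
    rw [← zpow_add_one₀ hq]
    congr 1
    ring
  have z2 : q ^ (1 - (l : ℤ)) * q = q ^ (2 - (l : ℤ)) := by
    rw [← zpow_add_one₀ hq]
    congr 1
    ring
  rw [z1, z2]
  ring
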